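/- Let G be a connected graph with a cut-vertex v such that G1 and G2 are two connected subgraphs of G having v as their only common vertex and V(G1) ∪ V(G2) = V(G). Let n1 = |V(G1)|, n2 = |V(G2)|, m1 = |E(G1)|, m2 = |E(G2)|. Then D_R(G) = D_R(G1) + D_R(G2) + 2·m2·Kf_v(G1) + 2·m1·Kf_v(G2) + (n2 − 1)·D_v(G1) + (n1 − 1)·D_v(G2). -/

import Mathlib

open Finset

/-- Effective resistance between two vertices of a graph (for a connected graph
this is the effective resistance when every edge is a unit resistor), defined via
the matrix-tree / spanning-two-forest determinant formula. -/
noncomputable def effRes {V : Type*} [Finite V] (G : SimpleGraph V) (u v : V) : ℝ :=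
  letI := Fintype.ofFinite V
  letI := Classical.decEq V
  letI : DecidableRel G.Adj := Classical.decRel _
  if u = v then 0
  else
    Matrix.det ((G.lapMatrix ℝ).submatrix
        (fun w : {w : V // w ≠ u ∧ w ≠ v} => (w : V)) (fun w => (w : V)))
      / Matrix.det ((G.lapMatrix ℝ).submatrix
        (fun w : {w : V // w ≠ u} => (w : V)) (fun w => (w : V)))

/-- The degree resistance distance `D_R(G) = Σ_{ {u,v} ⊆ V } (d(u)+d(v)) R(u,v)`. -/
noncomputable def degRes {V : Type*} [Finite V] (G : SimpleGraph V) : ℝ :=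
  letI := Fintype.ofFinite V
  letI := Classical.decEq V
  letI : DecidableRel G.Adj := Classical.decRel _
  (1 / 2) * ∑ u : V, ∑ v : V, ((G.degree u : ℝ) + (G.degree v : ℝ)) * effRes G u v

/-- The Kirchhoff index `Kf(G) = Σ_{ {u,v} ⊆ V } R(u,v)`. -/
noncomputable def kirchhoffIndex {V : Type*} [Finite V] (G : SimpleGraph V) : ℝ :=
  letI := Fintype.ofFinite V
  (1 / 2) * ∑ u : V, ∑ v : V, effRes G u v

/-- `Kf_v(G) = Σ_{u ∈ V} R(u,v)`. -/
noncomputable def Kfv {V : Type*} [Finite V] (G : SimpleGraph V) (v : V) : ℝ :=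
  letI := Fintype.ofFinite V
  ∑ u : V, effRes G u v

/-- `D_v(G) = Σ_{u ∈ V} d(u) R(u,v)`. -/
noncomputable def Dv {V : Type*} [Finite V] (G : SimpleGraph V) (v : V) : ℝ :=
  letI := Fintype.ofFinite V
  letI := Classical.decEq V
  letI : DecidableRel G.Adj := Classical.decRel _
  ∑ u : V, (G.degree u : ℝ) * effRes G u v

/-- A subgraph is a cycle if it is connected and `2`-regular. -/
def IsCycleSubgraph {V : Type*} {G : SimpleGraph V} (H : G.Subgraph) : Prop :=
  H.coe.Connected ∧ ∀ v ∈ H.verts, {u | H.Adj v u}.ncard = 2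

/-- A cactus is a connected graph in which any two distinct cycles share at most
one vertex (equivalently, every block is an edge or a cycle). -/
def IsCactus {V : Type*} (G : SimpleGraph V) : Prop :=
  G.Connected ∧ ∀ H₁ H₂ : G.Subgraph, IsCycleSubgraph H₁ → IsCycleSubgraph H₂ →
    H₁ ≠ H₂ → (H₁.verts ∩ H₂.verts).ncard ≤ 1

/-- The number of cycles of a graph. -/
noncomputable def numCycles {V : Type*} (G : SimpleGraph V) : ℕ :=
  {H : G.Subgraph | IsCycleSubgraph H}.ncard

/-- `G ∈ Cact(n;t)`: `G` is a cactus with `n` vertices and `t` cycles. -/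
def MemCact {V : Type*} (n t : ℕ) (G : SimpleGraph V) : Prop :=
  IsCactus G ∧ Nat.card V = n ∧ numCycles G = t

/-- `G⁰(n,t)`: `t` triangles (on vertices `2i+1, 2i+2`, `i < t`) and `n - 2t - 1`
pendent edges, all sharing the common vertex `0`. -/
def G0 (n t : ℕ) : SimpleGraph (Fin n) :=
  SimpleGraph.fromRel (fun a b =>
    a.val = 0 ∨ (Odd a.val ∧ b.val = a.val + 1 ∧ b.val ≤ 2 * t))

/-!
A unit current from `u` to `w` has a potential `f`, unique up to constants, with
`L f = 1_u - 1_w` for the Laplacian `L`; Cramer's rule for the Laplacian grounded at `u` turns the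
quotient of determinants into `R(u,w) = f u - f w`. A potential on one side of a cut vertex `v`
extends to the whole graph by its value at `v`, as no current enters the other side. Hence
resistances within one side are those of that side, and `R(u,w) = R(u,v) + R(v,w)` when `v`
separates `u` from `w`. Since `D_R = ∑ u, d(u) Kf_u`, it remains to split each degree and each
`Kf_u` along the two sides.
-/

section Matrix

open Matrix

theorem adjugate_apply_self_eq_det_submatrix {m n R : Type*} [Fintype m] [DecidableEq m]
    [Fintype n] [DecidableEq n] [CommRing R] (M : Matrix n n R) (i : n) (e : m ≃ {j // j ≠ i}) :
    M.adjugate i i = (M.submatrix (fun x ↦ (e x : n)) (fun x ↦ (e x : n))).det := by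
  have hrow : ∀ k, ¬ k ≠ i → ∀ j, j ≠ i → M.updateRow i (Pi.single i 1) k j = 0 := by
    intro k hk j hj
    rw [not_not.mp hk, updateRow_self, Pi.single_eq_of_ne hj]
  have hminor : (M.updateRow i (Pi.single i 1)).toSquareBlockProp (· ≠ i) =
      M.submatrix ((↑) : {j // j ≠ i} → n) (↑) := by
    ext k j
    simp [toSquareBlockProp, updateRow_ne k.2]
  have : Subsingleton {k // ¬ k ≠ i} :=
    ⟨fun k l ↦ Subtype.ext ((not_not.mp k.2).trans (not_not.mp l.2).symm)⟩
  rw [adjugate_apply, twoBlockTriangular_det _ _ hrow, hminor,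
    det_eq_elem_of_subsingleton _ (⟨i, not_not.mpr rfl⟩ : {k // ¬ k ≠ i}),
    ← det_submatrix_equiv_self e]
  simp [toSquareBlockProp, submatrix_submatrix, Function.comp_def]

end Matrix

theorem exists_sub_apply_eq {V R : Type*} [AddGroup R] (u : V) (g : {x // x ≠ u} → R) :
    ∃ f : V → R, (fun y : {x // x ≠ u} ↦ f y - f u) = g := by
  refine ⟨Function.extend (↑) g 0, funext fun y ↦ ?_⟩
  have hu : Function.extend ((↑) : {x // x ≠ u} → V) g 0 u = 0 :=
    Function.extend_apply' _ _ _ (by simp)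
  rw [hu, sub_zero, Subtype.val_injective.extend_apply]

section Laplacian

open Matrix

variable {V : Type*} [Fintype V] [DecidableEq V] (G : SimpleGraph V) [DecidableRel G.Adj]

theorem lapMatrix_mulVec_apply_eq_sum_ite {R : Type*} [NonAssocRing R] (f : V → R) (x : V) :
    (G.lapMatrix R *ᵥ f) x = ∑ y, if G.Adj x y then f x - f y else 0 := by
  rw [G.lapMatrix_mulVec_apply, ← sum_filter, ← G.neighborFinset_eq_filter, sum_sub_distrib,
    sum_const, G.card_neighborFinset_eq_degree, nsmul_eq_mul]

theorem sum_lapMatrix_mulVec {R : Type*} [CommRing R] (f : V → R) :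
    ∑ x, (G.lapMatrix R *ᵥ f) x = 0 := by
  calc ∑ x, (G.lapMatrix R *ᵥ f) x = (fun _ ↦ 1) ⬝ᵥ (G.lapMatrix R *ᵥ f) := by simp [dotProduct]
    _ = (G.lapMatrix R *ᵥ fun _ ↦ 1) ⬝ᵥ f := by
      rw [dotProduct_mulVec, ← mulVec_transpose, (G.isSymm_lapMatrix R).eq]
    _ = 0 := by rw [G.lapMatrix_mulVec_const_eq_zero, zero_dotProduct]

variable {G} in
theorem lapMatrix_mulVec_eq_of_forall_ne {R : Type*} [CommRing R] {f b : V → R} (u : V)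
    (hb : ∑ x, b x = 0) (h : ∀ x ≠ u, (G.lapMatrix R *ᵥ f) x = b x) : G.lapMatrix R *ᵥ f = b := by
  have hsum : ∑ x, ((G.lapMatrix R *ᵥ f) x - b x) = 0 := by
    rw [sum_sub_distrib, sum_lapMatrix_mulVec, hb, sub_zero]
  rw [Fintype.sum_eq_single u fun x hx ↦ sub_eq_zero.mpr (h x hx), sub_eq_zero] at hsum
  ext x
  by_cases hx : x = u
  · exact hx ▸ hsum
  · exact h x hx

/-- The Laplacian of `G` grounded at `u` (also called the reduced Laplacian): the row and the column
of `u` are deleted, which amounts to fixing the potential at `u`. -/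
def groundedLapMatrix (R : Type*) [AddGroupWithOne R] (u : V) :
    Matrix {x // x ≠ u} {x // x ≠ u} R :=
  (G.lapMatrix R).submatrix (↑) (↑)

theorem groundedLapMatrix_mulVec_sub {R : Type*} [CommRing R] (u : V) (f : V → R)
    (x : {x // x ≠ u}) :
    (groundedLapMatrix G R u *ᵥ fun y ↦ f y - f u) x = (G.lapMatrix R *ᵥ f) x := by
  have hrow : ∑ y, G.lapMatrix R x y = 0 := by
    simpa [mulVec, dotProduct] using congrFun (G.lapMatrix_mulVec_const_eq_zero (R := R)) x
  calc (groundedLapMatrix G R u *ᵥ fun y ↦ f y - f u) x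
      = ∑ y, G.lapMatrix R x y * (f y - f u) :=
        Fintype.sum_of_injective _ Subtype.val_injective _ _
          (fun y hy ↦ by simp_all) fun y ↦ rfl
    _ = (G.lapMatrix R *ᵥ f) x := by
        simp only [mul_sub, sum_sub_distrib, ← sum_mul, hrow, zero_mul, sub_zero]
        rfl

variable {G}

theorem det_groundedLapMatrix_ne_zero (hG : G.Connected) (u : V) :
    (groundedLapMatrix G ℝ u).det ≠ 0 := by
  intro hdet
  obtain ⟨g, hg, hLg⟩ := exists_mulVec_eq_zero_iff.mpr hdet
  obtain ⟨f, rfl⟩ := exists_sub_apply_eq u g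
  have hLf : G.lapMatrix ℝ *ᵥ f = 0 := lapMatrix_mulVec_eq_of_forall_ne u (by simp) fun x hx ↦ by
    rw [← groundedLapMatrix_mulVec_sub G u f ⟨x, hx⟩, hLg, Pi.zero_apply, Pi.zero_apply]
  rw [G.lapMatrix_mulVec_eq_zero_iff_forall_reachable] at hLf
  exact hg (funext fun y ↦ sub_eq_zero.mpr (hLf y u (hG.preconnected _ _)))

theorem exists_lapMatrix_mulVec_eq (hG : G.Connected) {b : V → ℝ} (hb : ∑ x, b x = 0) :
    ∃ f : V → ℝ, G.lapMatrix ℝ *ᵥ f = b := by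
  obtain ⟨u⟩ := hG.nonempty
  obtain ⟨g, hg⟩ := mulVec_surjective_iff_isUnit.mpr
    ((isUnit_iff_isUnit_det _).mpr (det_groundedLapMatrix_ne_zero hG u).isUnit) fun x ↦ b x
  obtain ⟨f, rfl⟩ := exists_sub_apply_eq u g
  refine ⟨f, lapMatrix_mulVec_eq_of_forall_ne u hb fun x hx ↦ ?_⟩
  rw [← groundedLapMatrix_mulVec_sub G u f ⟨x, hx⟩, hg]

end Laplacian

theorem effRes_self {V : Type*} [Finite V] (G : SimpleGraph V) (u : V) : effRes G u u = 0 :=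
  if_pos rfl

section Potential

open Matrix

variable {V : Type*} [Fintype V] [DecidableEq V] {G : SimpleGraph V} [DecidableRel G.Adj]
  {u v w : V} {f g : V → ℝ}

variable (G) in
/-- `f` is an electric potential of the unit current entering `G` at `u` and leaving it at `w`:
Kirchhoff's current law, with every edge a unit resistor. -/
def IsUnitPotential (u w : V) (f : V → ℝ) : Prop :=
  G.lapMatrix ℝ *ᵥ f = Pi.single u 1 - Pi.single w 1

theorem exists_isUnitPotential (hG : G.Connected) (u w : V) : ∃ f, IsUnitPotential G u w f :=
  exists_lapMatrix_mulVec_eq hG (by simp)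

theorem IsUnitPotential.neg (hf : IsUnitPotential G u w f) : IsUnitPotential G w u (-f) := by
  rw [IsUnitPotential, mulVec_neg, hf, neg_sub]

theorem IsUnitPotential.add (hf : IsUnitPotential G u v f) (hg : IsUnitPotential G v w g) :
    IsUnitPotential G u w (f + g) := by
  rw [IsUnitPotential, mulVec_add, hf, hg, sub_add_sub_cancel]

-- If the grounded Laplacian is singular, both sides are `0`: a division by `0` and a junk inverse.
theorem effRes_eq_inv_groundedLapMatrix_apply (h : w ≠ u) :
    effRes G u w = (groundedLapMatrix G ℝ u)⁻¹ ⟨w, h⟩ ⟨w, h⟩ := by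
  let e : {x // x ≠ u ∧ x ≠ w} ≃ {x : {x // x ≠ u} // x ≠ ⟨w, h⟩} :=
    (Equiv.subtypeSubtypeEquivSubtypeInter (· ≠ u) (· ≠ w)).symm.trans
      (Equiv.subtypeEquivRight fun _ ↦ Subtype.coe_ne_coe (b := ⟨w, h⟩))
  rw [Matrix.inv_def, Matrix.smul_apply, adjugate_apply_self_eq_det_submatrix _ _ e,
    Ring.inverse_eq_inv', smul_eq_mul, inv_mul_eq_div, effRes, if_neg h.symm]
  simp only [groundedLapMatrix, submatrix_submatrix]
  congr!

theorem IsUnitPotential.effRes_eq (hG : G.Connected) (hf : IsUnitPotential G u w f) :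
    effRes G u w = f u - f w := by
  obtain rfl | hwu := eq_or_ne w u
  · rw [effRes_self, sub_self]
  have hdrop : groundedLapMatrix G ℝ u *ᵥ (fun y ↦ f y - f u) = -Pi.single ⟨w, hwu⟩ 1 := by
    ext x
    rw [groundedLapMatrix_mulVec_sub, hf]
    simp [Pi.single_apply, x.2, Subtype.ext_iff]
  have hinv : (fun y : {x // x ≠ u} ↦ f y - f u) =
      (groundedLapMatrix G ℝ u)⁻¹ *ᵥ -Pi.single ⟨w, hwu⟩ 1 := by
    rw [← hdrop, mulVec_mulVec, nonsing_inv_mul _ (det_groundedLapMatrix_ne_zero hG u).isUnit,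
      one_mulVec]
  have hw : f w - f u = -(groundedLapMatrix G ℝ u)⁻¹ ⟨w, hwu⟩ ⟨w, hwu⟩ := by
    simpa [mulVec_neg] using congrFun hinv ⟨w, hwu⟩
  rw [effRes_eq_inv_groundedLapMatrix_apply hwu, ← neg_sub (f w), hw, neg_neg]

end Potential

theorem effRes_comm {V : Type*} [Finite V] {G : SimpleGraph V} (hG : G.Connected) (u w : V) :
    effRes G u w = effRes G w u := by
  classical
  have := Fintype.ofFinite V
  obtain ⟨f, hf⟩ := exists_isUnitPotential hG u w
  rw [hf.effRes_eq hG, hf.neg.effRes_eq hG, Pi.neg_apply, Pi.neg_apply, neg_sub_neg]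

section Indices

variable {V : Type*} [Fintype V] (G : SimpleGraph V)

theorem Kfv_eq_sum (v : V) : Kfv G v = ∑ u, effRes G u v := by
  unfold Kfv
  congr!

theorem Dv_eq_sum [DecidableRel G.Adj] (v : V) :
    Dv G v = ∑ u, (G.degree u : ℝ) * effRes G u v := by
  unfold Dv
  congr!

variable {G} in
theorem degRes_eq_sum_degree_mul_Kfv [DecidableRel G.Adj] (hG : G.Connected) :
    degRes G = ∑ u, (G.degree u : ℝ) * Kfv G u := by
  have hdegRes : degRes G =
      1 / 2 * ∑ u, ∑ w, ((G.degree u : ℝ) + G.degree w) * effRes G u w := by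
    unfold degRes
    congr!
  have hleft : ∑ u, ∑ w, (G.degree u : ℝ) * effRes G u w = ∑ u, (G.degree u : ℝ) * Kfv G u := by
    simp only [Kfv_eq_sum, mul_sum, effRes_comm hG]
  have hright : ∑ u, ∑ w, (G.degree w : ℝ) * effRes G u w = ∑ u, (G.degree u : ℝ) * Kfv G u := by
    rw [sum_comm]
    simp only [Kfv_eq_sum, mul_sum]
  simp only [hdegRes, add_mul, sum_add_distrib, hleft, hright]
  ring

end Indices

section Subgraph

variable {V : Type*} {G : SimpleGraph V} (H : G.Subgraph) [Fintype H.verts]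

theorem sum_coe_degree_eq_two_mul_ncard_edgeSet [DecidableRel H.coe.Adj] :
    ∑ x : H.verts, H.coe.degree x = 2 * H.edgeSet.ncard := by
  classical
  rw [H.coe.sum_degrees_eq_twice_card_edges, ← H.image_coe_edgeSet_coe,
    Set.ncard_image_of_injective _ (Sym2.map.injective Subtype.val_injective),
    ← H.coe.coe_edgeFinset, Set.ncard_coe_finset]

theorem sum_coe_degree_mul [Fintype V] [∀ x, Fintype (H.neighborSet x)]
    [∀ x, Fintype (H.coe.neighborSet x)] {R : Type*} [NonAssocSemiring R] (F : V → R) :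
    ∑ x : H.verts, (H.coe.degree x : R) * F x = ∑ x, (H.degree x : R) * F x :=
  Fintype.sum_of_injective _ Subtype.val_injective _ _
    (fun x hx ↦ by rw [H.degree_of_notMem_verts (by simpa using hx), Nat.cast_zero, zero_mul])
    fun x ↦ by rw [H.coe_degree]

end Subgraph

section OneSum

open Matrix

variable {V : Type*} {G : SimpleGraph V} {H₁ H₂ : G.Subgraph} {v : V}

/-- `G` is the one-sum (coalescence) of its subgraphs `H₁` and `H₂` at `v`: together they make up
`G`, and `v` is their only common vertex. -/
structure IsOneSum (H₁ H₂ : G.Subgraph) (v : V) : Prop where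
  sup_eq_top : H₁ ⊔ H₂ = ⊤
  verts_inter_verts : H₁.verts ∩ H₂.verts = {v}

namespace IsOneSum

theorem symm (h : IsOneSum H₁ H₂ v) : IsOneSum H₂ H₁ v :=
  ⟨sup_comm H₂ H₁ ▸ h.sup_eq_top, Set.inter_comm _ _ ▸ h.verts_inter_verts⟩

theorem mem_left (h : IsOneSum H₁ H₂ v) : v ∈ H₁.verts :=
  (h.verts_inter_verts.ge rfl).1

theorem mem_right (h : IsOneSum H₁ H₂ v) : v ∈ H₂.verts :=
  h.symm.mem_left

theorem eq_of_mem (h : IsOneSum H₁ H₂ v) {x : V} (h₁ : x ∈ H₁.verts) (h₂ : x ∈ H₂.verts) : x = v :=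
  h.verts_inter_verts.le ⟨h₁, h₂⟩

theorem verts_union_verts (h : IsOneSum H₁ H₂ v) : H₁.verts ∪ H₂.verts = Set.univ := by
  rw [← SimpleGraph.Subgraph.verts_sup, h.sup_eq_top, SimpleGraph.Subgraph.verts_top]

theorem adj_iff (h : IsOneSum H₁ H₂ v) {x y : V} : G.Adj x y ↔ H₁.Adj x y ∨ H₂.Adj x y := by
  rw [← SimpleGraph.Subgraph.sup_adj, h.sup_eq_top, SimpleGraph.Subgraph.top_adj]

theorem not_adj_and_adj (h : IsOneSum H₁ H₂ v) {x y : V} : ¬ (H₁.Adj x y ∧ H₂.Adj x y) :=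
  fun ⟨h₁, h₂⟩ ↦ h₁.ne <| (h.eq_of_mem h₁.fst_mem h₂.fst_mem).trans
    (h.eq_of_mem h₁.snd_mem h₂.snd_mem).symm

theorem connected (h : IsOneSum H₁ H₂ v) (h₁ : H₁.coe.Connected) (h₂ : H₂.coe.Connected) :
    G.Connected := by
  have hsup : (H₁ ⊔ H₂).Connected :=
    SimpleGraph.Subgraph.connected_sup ⟨h₁.preconnected⟩ ⟨h₂.preconnected⟩
      ⟨v, h.mem_left, h.mem_right⟩
  rw [h.sup_eq_top] at hsup
  exact SimpleGraph.Subgraph.topIso.connected_iff.mp hsup.coe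

theorem exists_retraction (h : IsOneSum H₁ H₂ v) :
    ∃ ρ : V → H₁.verts, (∀ x : H₁.verts, ρ x = x) ∧ ∀ x ∈ H₂.verts, ρ x = ⟨v, h.mem_left⟩ := by
  classical
  refine ⟨fun x ↦ if hx : x ∈ H₁.verts then ⟨x, hx⟩ else ⟨v, h.mem_left⟩, by simp, fun x hx ↦ ?_⟩
  by_cases hx₁ : x ∈ H₁.verts
  · simp [h.eq_of_mem hx₁ hx, h.mem_left]
  · simp [hx₁]

theorem degree_eq_add [Fintype V] [DecidableRel G.Adj] (h : IsOneSum H₁ H₂ v)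
    [∀ x, Fintype (H₁.neighborSet x)] [∀ x, Fintype (H₂.neighborSet x)] (x : V) :
    G.degree x = H₁.degree x + H₂.degree x := by
  classical
  rw [← H₁.finset_card_neighborSet_eq_degree, ← H₂.finset_card_neighborSet_eq_degree,
    ← card_union_of_disjoint, ← G.card_neighborFinset_eq_degree]
  · congr 1
    ext y
    simp [h.adj_iff]
  · rw [disjoint_left]
    simpa using fun y h₁ h₂ ↦ h.not_adj_and_adj ⟨h₁, h₂⟩

section Sums

variable [Fintype V] [Fintype H₁.verts] [Fintype H₂.verts]

theorem sum_add_apply {R : Type*} [AddCommMonoid R] (h : IsOneSum H₁ H₂ v) (F : V → R) :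
    ∑ x, F x + F v = ∑ x : H₁.verts, F x + ∑ x : H₂.verts, F x := by
  classical
  have hunion : H₁.verts.toFinset ∪ H₂.verts.toFinset = univ := by
    rw [← Set.toFinset_union, Set.toFinset_eq_univ.mpr h.verts_union_verts]
  have hinter : H₁.verts.toFinset ∩ H₂.verts.toFinset = {v} := by
    simp only [← Set.toFinset_inter, h.verts_inter_verts, Set.toFinset_singleton]
  rw [sum_set_coe, sum_set_coe, ← sum_union_inter, hunion, hinter, sum_singleton]

theorem sum_degree_mul {R : Type*} [NonAssocSemiring R] (h : IsOneSum H₁ H₂ v)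
    [DecidableRel G.Adj] [DecidableRel H₁.coe.Adj] [DecidableRel H₂.coe.Adj] (F : V → R) :
    ∑ x, (G.degree x : R) * F x =
      ∑ x : H₁.verts, (H₁.coe.degree x : R) * F x +
        ∑ x : H₂.verts, (H₂.coe.degree x : R) * F x := by
  classical
  simp only [h.degree_eq_add, Nat.cast_add, add_mul, sum_add_distrib]
  rw [← sum_coe_degree_mul H₁, ← sum_coe_degree_mul H₂]
  congr!

end Sums

section Extension

variable [Fintype V] [DecidableEq V] [DecidableRel G.Adj]

theorem lapMatrix_mulVec_apply_of_notMem {R : Type*} [NonAssocRing R] (h : IsOneSum H₁ H₂ v)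
    {F : V → R} (hF : ∀ x ∈ H₂.verts, F x = F v) {x : V} (hx : x ∉ H₁.verts) :
    (G.lapMatrix R *ᵥ F) x = 0 := by
  rw [lapMatrix_mulVec_apply_eq_sum_ite]
  refine sum_eq_zero fun y _ ↦ ite_eq_right_iff.mpr fun hxy ↦ ?_
  have h₂ : H₂.Adj x y := (h.adj_iff.mp hxy).resolve_left fun h₁ ↦ hx h₁.fst_mem
  rw [hF _ h₂.fst_mem, hF _ h₂.snd_mem, sub_self]

variable [Fintype H₁.verts] [DecidableRel H₁.coe.Adj]

theorem lapMatrix_mulVec_apply_of_mem {R : Type*} [NonAssocRing R] (h : IsOneSum H₁ H₂ v)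
    {F : V → R} (hF : ∀ x ∈ H₂.verts, F x = F v) (x : H₁.verts) :
    (G.lapMatrix R *ᵥ F) x = (H₁.coe.lapMatrix R *ᵥ fun y ↦ F y) x := by
  simp only [lapMatrix_mulVec_apply_eq_sum_ite]
  have hdrop {y : V} (hxy : H₂.Adj x y) : F x - F y = 0 := by
    rw [hF _ hxy.fst_mem, hF _ hxy.snd_mem, sub_self]
  refine (Fintype.sum_of_injective _ Subtype.val_injective _ _ (fun y hy ↦ ?_) fun y ↦ ?_).symm
  · have hxy : ¬ H₁.Adj x y := fun hxy ↦ hy ⟨⟨y, hxy.snd_mem⟩, rfl⟩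
    simpa [h.adj_iff, hxy] using hdrop
  · by_cases hxy : H₁.Adj x y
    · simp [h.adj_iff, hxy]
    · simpa [h.adj_iff, hxy] using fun h₂ ↦ (hdrop h₂).symm

theorem exists_isUnitPotential_extension (h : IsOneSum H₁ H₂ v) {u w : H₁.verts}
    {f : H₁.verts → ℝ} (hf : IsUnitPotential H₁.coe u w f) :
    ∃ F : V → ℝ, IsUnitPotential G u w F ∧ (∀ x : H₁.verts, F x = f x) ∧
      ∀ x ∈ H₂.verts, F x = F v := by
  obtain ⟨ρ, hρ₁, hρ₂⟩ := h.exists_retraction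
  have hF : ∀ x ∈ H₂.verts, f (ρ x) = f (ρ v) := fun x hx ↦ by
    rw [hρ₂ x hx, hρ₂ v h.mem_right]
  refine ⟨fun x ↦ f (ρ x), funext fun x ↦ ?_, fun x ↦ congrArg f (hρ₁ x), hF⟩
  by_cases hx : x ∈ H₁.verts
  · rw [h.lapMatrix_mulVec_apply_of_mem hF ⟨x, hx⟩]
    simp only [hρ₁]
    rw [hf]
    simp [Pi.single_apply, Subtype.ext_iff]
  · have hxu : x ≠ u := fun hxu ↦ hx (hxu ▸ u.2)
    have hxw : x ≠ w := fun hxw ↦ hx (hxw ▸ w.2)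
    rw [h.lapMatrix_mulVec_apply_of_notMem hF hx]
    simp [hxu, hxw]

end Extension

variable [Finite V]

theorem effRes_left (h : IsOneSum H₁ H₂ v) (h₁ : H₁.coe.Connected) (h₂ : H₂.coe.Connected)
    (u w : H₁.verts) : effRes G u w = effRes H₁.coe u w := by
  classical
  have := Fintype.ofFinite V
  obtain ⟨f, hf⟩ := exists_isUnitPotential h₁ u w
  obtain ⟨F, hF, hFf, -⟩ := h.exists_isUnitPotential_extension hf
  rw [hf.effRes_eq h₁, hF.effRes_eq (h.connected h₁ h₂), hFf, hFf]

theorem effRes_left_right (h : IsOneSum H₁ H₂ v) (h₁ : H₁.coe.Connected)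
    (h₂ : H₂.coe.Connected) (u : H₁.verts) (w : H₂.verts) :
    effRes G u w =
      effRes H₁.coe u ⟨v, h.mem_left⟩ + effRes H₂.coe ⟨v, h.mem_right⟩ w := by
  classical
  have := Fintype.ofFinite V
  obtain ⟨f, hf⟩ := exists_isUnitPotential h₁ u ⟨v, h.mem_left⟩
  obtain ⟨g, hg⟩ := exists_isUnitPotential h₂ ⟨v, h.mem_right⟩ w
  obtain ⟨F, hF, hFf, hFv⟩ := h.exists_isUnitPotential_extension hf
  obtain ⟨K, hK, hKg, hKv⟩ := h.symm.exists_isUnitPotential_extension hg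
  rw [(hF.add hK).effRes_eq (h.connected h₁ h₂), hf.effRes_eq h₁, hg.effRes_eq h₂, ← hFf, ← hFf,
    ← hKg, ← hKg, Pi.add_apply, Pi.add_apply, hFv w w.2, hKv u u.2]
  ring

theorem Kfv_left (h : IsOneSum H₁ H₂ v) (h₁ : H₁.coe.Connected) (h₂ : H₂.coe.Connected)
    (u : H₁.verts) :
    Kfv G u = Kfv H₁.coe u + Kfv H₂.coe ⟨v, h.mem_right⟩ +
      ((H₂.verts.ncard : ℝ) - 1) * effRes H₁.coe u ⟨v, h.mem_left⟩ := by
  classical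
  have := Fintype.ofFinite V
  have hv : effRes G v u = effRes H₁.coe u ⟨v, h.mem_left⟩ := by
    rw [effRes_comm h₁, ← h.effRes_left h₁ h₂]
  have hsum₁ : ∑ w : H₁.verts, effRes G w u = Kfv H₁.coe u := by
    simp only [h.effRes_left h₁ h₂, Kfv_eq_sum]
  have hsum₂ : ∑ w : H₂.verts, effRes G w u = Kfv H₂.coe ⟨v, h.mem_right⟩ +
      H₂.verts.ncard * effRes H₁.coe u ⟨v, h.mem_left⟩ := by
    simp only [h.symm.effRes_left_right h₂ h₁, effRes_comm h₁ _ u, sum_add_distrib, Kfv_eq_sum,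
      sum_const, card_univ, nsmul_eq_mul, Set.ncard_eq_toFinset_card', Set.toFinset_card]
  have hsum := h.sum_add_apply fun w ↦ effRes G w u
  rw [← Kfv_eq_sum, hv, hsum₁, hsum₂] at hsum
  linarith

theorem sum_degree_mul_Kfv_left [Fintype H₁.verts] [DecidableRel H₁.coe.Adj]
    (h : IsOneSum H₁ H₂ v) (h₁ : H₁.coe.Connected) (h₂ : H₂.coe.Connected) :
    ∑ u : H₁.verts, (H₁.coe.degree u : ℝ) * Kfv G u =
      degRes H₁.coe + 2 * (H₁.edgeSet.ncard : ℝ) * Kfv H₂.coe ⟨v, h.mem_right⟩ +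
        ((H₂.verts.ncard : ℝ) - 1) * Dv H₁.coe ⟨v, h.mem_left⟩ := by
  have hedges : ∑ u : H₁.verts, (H₁.coe.degree u : ℝ) = 2 * H₁.edgeSet.ncard := by
    exact_mod_cast sum_coe_degree_eq_two_mul_ncard_edgeSet H₁
  simp only [h.Kfv_left h₁ h₂, mul_add, sum_add_distrib]
  rw [degRes_eq_sum_degree_mul_Kfv h₁, ← sum_mul, hedges, Dv_eq_sum, mul_sum]
  simp only [mul_left_comm]

end IsOneSum

end OneSum

/-- Lemma 1: decomposition of the degree resistance distance at a cut vertex. -/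
theorem stmt_0 {V : Type*} [Finite V] (G : SimpleGraph V) (hG : G.Connected)
    (v : V) (hcut : ¬ (G.induce {w : V | w ≠ v}).Connected)
    (G1 G2 : G.Subgraph)
    (h1c : G1.coe.Connected) (h2c : G2.coe.Connected)
    (hunion : G1 ⊔ G2 = ⊤)
    (hcommon : G1.verts ∩ G2.verts = {v})
    (hv1 : v ∈ G1.verts) (hv2 : v ∈ G2.verts) :
    degRes G = degRes G1.coe + degRes G2.coe
      + 2 * (G2.edgeSet.ncard : ℝ) * Kfv G1.coe ⟨v, hv1⟩
      + 2 * (G1.edgeSet.ncard : ℝ) * Kfv G2.coe ⟨v, hv2⟩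
      + ((G2.verts.ncard : ℝ) - 1) * Dv G1.coe ⟨v, hv1⟩
      + ((G1.verts.ncard : ℝ) - 1) * Dv G2.coe ⟨v, hv2⟩ := by
  classical
  have := Fintype.ofFinite V
  have h : IsOneSum G1 G2 v := ⟨hunion, hcommon⟩
  rw [degRes_eq_sum_degree_mul_Kfv hG, h.sum_degree_mul, h.sum_degree_mul_Kfv_left h1c h2c,
    h.symm.sum_degree_mul_Kfv_left h2c h1c]
  ring
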